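/- Upper bound of the smoothed max-relative entropy by the hypothesis testing divergence: For all states ρ, σ on ℂ^d and all ε ∈ (0,1), D_max^ε(ρ‖σ) ≤ D_H^{1−ε²}(ρ‖σ) − log(1 − ε²) in the extended reals. -/

import Mathlib

open scoped Kronecker ComplexOrder

noncomputable section

namespace QCD

attribute [local instance] Classical.propDecidable

variable {n m : Type} [Fintype n] [DecidableEq n] [Fintype m] [DecidableEq m]

/-- The real part of the trace of a complex matrix. -/
def rtr (A : Matrix n n ℂ) : ℝ := (A.trace).re

/-- A quantum state: positive semidefinite with trace one. -/
def IsState (ρ : Matrix n n ℂ) : Prop := ρ.PosSemidef ∧ ρ.trace = 1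

/-- Loewner order: `A ≤ B` iff `B - A` is positive semidefinite. -/
def loewnerLE (A B : Matrix n n ℂ) : Prop := (B - A).PosSemidef

/-- Support containment (for PSD matrices): `ker σ ⊆ ker ρ`. -/
def SuppLE (ρ σ : Matrix n n ℂ) : Prop := ∀ v : n → ℂ, σ.mulVec v = 0 → ρ.mulVec v = 0

/-- Functional calculus for Hermitian matrices (junk value `0` otherwise). -/
def matFun (f : ℝ → ℝ) (A : Matrix n n ℂ) : Matrix n n ℂ :=
  if hA : A.IsHermitian then
    (hA.eigenvectorUnitary : Matrix n n ℂ) *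
      Matrix.diagonal (fun i => (f (hA.eigenvalues i) : ℂ)) *
      (star (hA.eigenvectorUnitary : Matrix n n ℂ))
  else 0

/-- Matrix square root via functional calculus. -/
def msqrt (A : Matrix n n ℂ) : Matrix n n ℂ := matFun Real.sqrt A

/-- Matrix real power taken on the support (`0 ^ t := 0`). -/
def mpow (A : Matrix n n ℂ) (t : ℝ) : Matrix n n ℂ :=
  matFun (fun x => if x = 0 then 0 else x ^ t) A

/-- Matrix base-2 logarithm on the support. -/
def mlog (A : Matrix n n ℂ) : Matrix n n ℂ := matFun (Real.logb 2) A

/-- Positive part of a Hermitian matrix. -/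
def mposPart (A : Matrix n n ℂ) : Matrix n n ℂ := matFun (fun x => max x 0) A

/-- Trace norm. -/
def traceNorm (A : Matrix n m ℂ) : ℝ := rtr (msqrt (A.conjTranspose * A))

/-- Base-2 logarithm as an extended real (`⊥` on nonpositive input). -/
def elog (x : ℝ) : EReal := if x ≤ 0 then ⊥ else ((Real.logb 2 x : ℝ) : EReal)

/-- Base-2 logarithm of an extended real. -/
def elogE (x : EReal) : EReal := if x = ⊤ then ⊤ else elog x.toReal

/-- `2 ^ x` for an extended real `x`. -/
def epow2 (x : EReal) : EReal :=
  if x = ⊤ then ⊤ else if x = ⊥ then 0 else ((((2:ℝ) ^ x.toReal : ℝ)) : EReal)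

/-- Umegaki relative entropy (base 2), `⊤` if the support condition fails. -/
def relEntropy (ρ σ : Matrix n n ℂ) : EReal :=
  if SuppLE ρ σ then ((rtr (ρ * (mlog ρ - mlog σ)) : ℝ) : EReal) else ⊤

/-- Petz–Rényi divergence (base 2). -/
def petzRenyi (α : ℝ) (ρ σ : Matrix n n ℂ) : EReal :=
  if 1 < α ∧ ¬ SuppLE ρ σ then ⊤
  else (((α - 1)⁻¹ : ℝ) : EReal) * elog (rtr (mpow ρ α * mpow σ (1 - α)))

/-- Geometric (maximal) Rényi divergence (base 2). -/
def geomRenyi (α : ℝ) (ρ σ : Matrix n n ℂ) : EReal :=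
  if SuppLE ρ σ then
    (((α - 1)⁻¹ : ℝ) : EReal) *
      elog (rtr (σ * mpow (mpow σ (-(1/2 : ℝ)) * ρ * mpow σ (-(1/2 : ℝ))) α))
  else ⊤

/-- Max-relative entropy (base 2). -/
def dMax (ρ σ : Matrix n n ℂ) : EReal :=
  sInf {x : EReal | ∃ lam : ℝ, x = (lam : EReal) ∧ loewnerLE ρ ((((2:ℝ) ^ lam : ℝ) : ℂ) • σ)}

/-- Uhlmann fidelity. -/
def fidelity (ρ σ : Matrix n n ℂ) : ℝ := (rtr (msqrt (msqrt σ * ρ * msqrt σ))) ^ 2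

/-- Sine (purified) distance. -/
def sineDist (ρ σ : Matrix n n ℂ) : ℝ := Real.sqrt (1 - fidelity ρ σ)

/-- Smoothed max-relative entropy: smoothing over states in the sine-distance ball. -/
def dMaxSmooth (δ : ℝ) (ρ σ : Matrix n n ℂ) : EReal :=
  ⨅ (ρ' : Matrix n n ℂ) (_ : IsState ρ' ∧ sineDist ρ ρ' ≤ δ), dMax ρ' σ

/-- Hypothesis testing divergence (base 2). -/
def dH (ε : ℝ) (ρ σ : Matrix n n ℂ) : EReal :=
  - elog (sInf {x : ℝ | ∃ T : Matrix n n ℂ,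
      T.PosSemidef ∧ ((1 : Matrix n n ℂ) - T).PosSemidef ∧ 1 - ε ≤ rtr (T * ρ) ∧ x = rtr (T * σ)})

/-- The quantity `c_γ(ρ‖σ)`. -/
def cGamma (γ : ℝ) (ρ σ : Matrix n n ℂ) : EReal :=
  ((γ⁻¹ : ℝ) : EReal) *
    elogE (epow2 ((γ : ℝ) * petzRenyi (1 + γ) ρ σ) +
           epow2 (((-γ : ℝ) : EReal) * petzRenyi (1 - γ) ρ σ) + 1)

/-- Binary entropy (base 2). -/
def binEnt (x : ℝ) : ℝ := -(x * Real.logb 2 x) - (1 - x) * Real.logb 2 (1 - x)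

/-- Action of `id_k ⊗ Φ` on block matrices. -/
def blockApply {k : Type} (Φ : Matrix n n ℂ →ₗ[ℂ] Matrix m m ℂ)
    (M : Matrix (k × n) (k × n) ℂ) : Matrix (k × m) (k × m) ℂ :=
  Matrix.of fun p q => Φ (Matrix.of fun a b => M (p.1, a) (q.1, b)) p.2 q.2

/-- Action of `Φ ⊗ id_k` on block matrices. -/
def blockApplyRight {k : Type} (Φ : Matrix n n ℂ →ₗ[ℂ] Matrix m m ℂ)
    (M : Matrix (n × k) (n × k) ℂ) : Matrix (m × k) (m × k) ℂ :=
  Matrix.of fun p q => Φ (Matrix.of fun a b => M (a, p.2) (b, q.2)) p.1 q.1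

/-- Quantum channel: trace preserving and completely positive. -/
def IsQChannel (Φ : Matrix n n ℂ →ₗ[ℂ] Matrix m m ℂ) : Prop :=
  (∀ M : Matrix n n ℂ, (Φ M).trace = M.trace) ∧
  (∀ k : ℕ, 1 ≤ k → ∀ M : Matrix (Fin k × n) (Fin k × n) ℂ, M.PosSemidef →
    (blockApply Φ M).PosSemidef)

/-- `id_k ⊗ Φ` as a linear map. -/
def blockApplyL (k : Type) (Φ : Matrix n n ℂ →ₗ[ℂ] Matrix m m ℂ) :
    Matrix (k × n) (k × n) ℂ →ₗ[ℂ] Matrix (k × m) (k × m) ℂ where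
  toFun := blockApply Φ
  map_add' M N := by
    ext p q
    show Φ (Matrix.of fun a b => (M + N) (p.1, a) (q.1, b)) p.2 q.2 = _
    have h : (Matrix.of fun a b => (M + N) (p.1, a) (q.1, b)) =
        (Matrix.of fun a b => M (p.1, a) (q.1, b)) +
          (Matrix.of fun a b => N (p.1, a) (q.1, b)) := rfl
    rw [h, map_add]
    rfl
  map_smul' c M := by
    ext p q
    show Φ (Matrix.of fun a b => (c • M) (p.1, a) (q.1, b)) p.2 q.2 = _
    have h : (Matrix.of fun a b => (c • M) (p.1, a) (q.1, b)) =
        c • (Matrix.of fun a b => M (p.1, a) (q.1, b)) := rfl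
    rw [h, map_smul]
    rfl

/-- `Φ ⊗ id_k` as a linear map. -/
def blockApplyRightL (k : Type) (Φ : Matrix n n ℂ →ₗ[ℂ] Matrix m m ℂ) :
    Matrix (n × k) (n × k) ℂ →ₗ[ℂ] Matrix (m × k) (m × k) ℂ where
  toFun := blockApplyRight Φ
  map_add' M N := by
    ext p q
    show Φ (Matrix.of fun a b => (M + N) (a, p.2) (b, q.2)) p.1 q.1 = _
    have h : (Matrix.of fun a b => (M + N) (a, p.2) (b, q.2)) =
        (Matrix.of fun a b => M (a, p.2) (b, q.2)) +
          (Matrix.of fun a b => N (a, p.2) (b, q.2)) := rfl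
    rw [h, map_add]
    rfl
  map_smul' c M := by
    ext p q
    show Φ (Matrix.of fun a b => (c • M) (a, p.2) (b, q.2)) p.1 q.1 = _
    have h : (Matrix.of fun a b => (c • M) (a, p.2) (b, q.2)) =
        c • (Matrix.of fun a b => M (a, p.2) (b, q.2)) := rfl
    rw [h, map_smul]
    rfl

/-- Tensor product of two channels (Kronecker product action). -/
def tensorChannel {n₁ m₁ n₂ m₂ : Type}
    (E₁ : Matrix n₁ n₁ ℂ →ₗ[ℂ] Matrix m₁ m₁ ℂ) (E₂ : Matrix n₂ n₂ ℂ →ₗ[ℂ] Matrix m₂ m₂ ℂ) :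
    Matrix (n₁ × n₂) (n₁ × n₂) ℂ →ₗ[ℂ] Matrix (m₁ × m₂) (m₁ × m₂) ℂ :=
  (blockApplyRightL m₂ E₁).comp (blockApplyL n₁ E₂)

/-- Index type for `k`-fold tensor powers. -/
def tpow (ι : Type) : ℕ → Type
  | 0 => PUnit
  | (k+1) => tpow ι k × ι

def tpowFintype (ι : Type) [Fintype ι] : ∀ k : ℕ, Fintype (tpow ι k)
  | 0 => inferInstanceAs (Fintype PUnit)
  | (k+1) => letI := tpowFintype ι k; inferInstanceAs (Fintype (tpow ι k × ι))

instance (ι : Type) [Fintype ι] (k : ℕ) : Fintype (tpow ι k) := tpowFintype ι k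

def tpowDecEq (ι : Type) [DecidableEq ι] : ∀ k : ℕ, DecidableEq (tpow ι k)
  | 0 => inferInstanceAs (DecidableEq PUnit)
  | (k+1) => letI := tpowDecEq ι k; inferInstanceAs (DecidableEq (tpow ι k × ι))

instance (ι : Type) [DecidableEq ι] (k : ℕ) : DecidableEq (tpow ι k) := tpowDecEq ι k

/-- `k`-fold Kronecker tensor power of a matrix. -/
def tpowMat (ρ : Matrix n n ℂ) : ∀ k : ℕ, Matrix (tpow n k) (tpow n k) ℂ
  | 0 => 1
  | (k+1) => (tpowMat ρ k) ⊗ₖ ρ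

/-- `k`-fold tensor power of a channel. -/
def tpowChannel (Φ : Matrix n n ℂ →ₗ[ℂ] Matrix m m ℂ) :
    ∀ k : ℕ, Matrix (tpow n k) (tpow n k) ℂ →ₗ[ℂ] Matrix (tpow m k) (tpow m k) ℂ
  | 0 => LinearMap.id
  | (k+1) => tensorChannel (tpowChannel Φ k) Φ

/-- Channel divergence induced by a divergence `𝔇` on states:
sup over `k ≥ 1` and input states `ν` on `ℂ^k ⊗ ℂ^d`. -/
def chDiv (𝔇 : ∀ (p : Type) [Fintype p] [DecidableEq p], Matrix p p ℂ → Matrix p p ℂ → EReal)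
    (E F : Matrix n n ℂ →ₗ[ℂ] Matrix m m ℂ) : EReal :=
  ⨆ (k : ℕ) (_ : 1 ≤ k) (ν : Matrix (Fin k × n) (Fin k × n) ℂ) (_ : IsState ν),
    𝔇 (Fin k × m) (blockApply E ν) (blockApply F ν)

/-- The geometric Rényi divergence as a divergence family. -/
def geomD (α : ℝ) : ∀ (p : Type) [Fintype p] [DecidableEq p],
    Matrix p p ℂ → Matrix p p ℂ → EReal :=
  fun _ _ _ => geomRenyi α

/-- The Umegaki relative entropy as a divergence family. -/
def relD : ∀ (p : Type) [Fintype p] [DecidableEq p],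
    Matrix p p ℂ → Matrix p p ℂ → EReal :=
  fun _ _ _ => relEntropy

/-- The hypothesis testing divergence as a divergence family. -/
def dHD (ε : ℝ) : ∀ (p : Type) [Fintype p] [DecidableEq p],
    Matrix p p ℂ → Matrix p p ℂ → EReal :=
  fun _ _ _ => dH ε

/-- Regularized channel relative entropy. -/
def regRelEntropy (E F : Matrix n n ℂ →ₗ[ℂ] Matrix m m ℂ) : EReal :=
  ⨆ (k : ℕ) (_ : 1 ≤ k),
    (((k : ℝ)⁻¹ : ℝ) : EReal) * chDiv relD (tpowChannel E k) (tpowChannel F k)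

end QCD

/-!
Let `β` be the optimal type II error of a test of `ρ` against `σ`; it suffices to find a state
`τ ≤ β⁻¹ σ` with `√F(ρ, τ) ≥ √(1 - ε²)`. By Alberti's formula the states satisfying this fidelity
bound form a compact convex set. Separating it from the matrices below `β⁻¹ σ` by Hahn-Banach, it is
enough to find, for given `N ≥ 0` and `w > β⁻¹ tr (N σ)`, one of them with `tr (N τ) ≤ w`. Let `Q`
be the spectral projection of `N` on the eigenvalues below `w`. By Markov's inequality the test
`1 - Q` has `tr ((1 - Q) σ) < β`, so it accepts `ρ` with probability less than `ε²`. Hence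
`tr (Q ρ) > 1 - ε²`, and the normalised compression `Q ρ Q / tr (Q ρ)` is the required `τ`.
-/

namespace QCD

open Matrix Filter Topology
open scoped MatrixOrder Matrix.Norms.L2Operator

section Trace

variable {n : Type} [Fintype n] {A B C : Matrix n n ℂ}

lemma rtr_add (A B : Matrix n n ℂ) : rtr (A + B) = rtr A + rtr B := by simp [rtr]

lemma rtr_sub (A B : Matrix n n ℂ) : rtr (A - B) = rtr A - rtr B := by simp [rtr]

lemma rtr_smul (c : ℝ) (A : Matrix n n ℂ) : rtr (c • A) = c * rtr A := by simp [rtr]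

lemma rtr_conjTranspose (A : Matrix n n ℂ) : rtr Aᴴ = rtr A := by
  simp [rtr, trace_conjTranspose]

lemma rtr_mul_comm (A B : Matrix n n ℂ) : rtr (A * B) = rtr (B * A) := by
  rw [rtr, rtr, trace_mul_comm]

lemma rtr_mul_cycle (A B C : Matrix n n ℂ) : rtr (A * B * C) = rtr (C * A * B) := by
  rw [rtr, rtr, trace_mul_cycle]

@[fun_prop]
lemma continuous_rtr : Continuous (rtr : Matrix n n ℂ → ℝ) :=
  Complex.continuous_re.comp continuous_id.matrix_trace

lemma rtr_nonneg (hA : 0 ≤ A) : 0 ≤ rtr A :=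
  (Complex.le_def.1 hA.posSemidef.trace_nonneg).1

lemma rtr_mul_nonneg (hA : 0 ≤ A) (hB : 0 ≤ B) : 0 ≤ rtr (A * B) := by
  classical
  have hsqrt : rtr (A * B) = rtr (CFC.sqrt A * B * CFC.sqrt A) := by
    rw [rtr_mul_cycle, CFC.sqrt_mul_sqrt_self A]
  rw [hsqrt]
  exact rtr_nonneg ((CFC.sqrt_nonneg A).isSelfAdjoint.conjugate_nonneg hB)

lemma rtr_mul_le_rtr_mul_right (hAB : A ≤ B) (hC : 0 ≤ C) : rtr (A * C) ≤ rtr (B * C) := by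
  have h := rtr_mul_nonneg (sub_nonneg.2 hAB) hC
  rwa [sub_mul, rtr_sub, sub_nonneg] at h

lemma trace_eq_rtr (hA : 0 ≤ A) : A.trace = rtr A := by
  refine Complex.ext rfl ?_
  simpa using (Complex.le_def.1 hA.posSemidef.trace_nonneg).2.symm

lemma IsState.nonneg (hA : IsState A) : 0 ≤ A := hA.1.nonneg

lemma IsState.rtr_eq_one (hA : IsState A) : rtr A = 1 := by
  simp [rtr, hA.2]

end Trace

section SpectralCalculus

variable {n : Type} [Fintype n] [DecidableEq n] {A : Matrix n n ℂ}

lemma matFun_eq_cfc (f : ℝ → ℝ) (hA : A.IsHermitian) : matFun f A = cfc f A := by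
  rw [matFun, dif_pos hA, hA.cfc_eq, IsHermitian.cfc, Unitary.conjStarAlgAut_apply]
  rfl

lemma msqrt_eq_sqrt (hA : 0 ≤ A) : msqrt A = CFC.sqrt A := by
  rw [msqrt, matFun_eq_cfc _ hA.posSemidef.isHermitian, CFC.sqrt_eq_real_sqrt A, cfcₙ_eq_cfc]

lemma exists_isStarProjection_threshold (hA : 0 ≤ A) (w : ℝ) :
    ∃ Q : Matrix n n ℂ, IsStarProjection Q ∧ w • (1 - Q) ≤ A ∧ Q * A * Q ≤ w • Q := by
  have hcont (f : ℝ → ℝ) : ContinuousOn f (spectrum ℝ A) := finite_real_spectrum.continuousOn f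
  let q : ℝ → ℝ := fun x ↦ if w ≤ x then 0 else 1
  have hle : w • (1 - cfc q A) = cfc (fun x ↦ w • (1 - q x)) A := by
    rw [cfc_smul w _ A (hcont _), cfc_sub _ _ A (hcont _) (hcont _), cfc_const_one ℝ A]
  have hconj : cfc q A * A * cfc q A = cfc (fun x ↦ q x * x * q x) A := by
    rw [cfc_mul _ _ A (hcont _) (hcont _), cfc_mul _ _ A (hcont _) (hcont _), cfc_id' ℝ A]
  refine ⟨cfc q A, ⟨?_, cfc_predicate q A⟩, ?_, ?_⟩
  · rw [IsIdempotentElem, ← cfc_mul _ _ A (hcont _) (hcont _)]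
    congr! 2 with x
    simp [q]
  · calc w • (1 - cfc q A) = cfc (fun x ↦ w • (1 - q x)) A := hle
      _ ≤ cfc (fun x ↦ x) A := (cfc_le_iff _ _ A (hcont _) (hcont _)).2 fun x hx ↦ by
          by_cases hwx : w ≤ x
          · simp [q, hwx]
          · simpa [q, hwx] using spectrum_nonneg_of_nonneg hA hx
      _ = A := cfc_id' ℝ A
  · rw [hconj, ← cfc_smul w q A (hcont _), cfc_le_iff _ _ A (hcont _) (hcont _)]
    intro x _
    by_cases hwx : w ≤ x
    · simp [q, hwx]
    · simpa [q, hwx] using (not_le.1 hwx).le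

lemma norm_le_rtr (hA : 0 ≤ A) : ‖A‖ ≤ rtr A := by
  cases subsingleton_or_nontrivial (Matrix n n ℂ)
  · simpa [Subsingleton.elim A 0] using rtr_nonneg hA
  have hspec := CStarAlgebra.norm_mem_spectrum_of_nonneg hA
  rw [hA.posSemidef.isHermitian.spectrum_real_eq_range_eigenvalues] at hspec
  obtain ⟨i, hi⟩ := hspec
  have htrace : rtr A = ∑ j, hA.posSemidef.isHermitian.eigenvalues j := by
    simp [rtr, hA.posSemidef.isHermitian.trace_eq_sum_eigenvalues]
  rw [← hi, htrace]
  exact Finset.single_le_sum (fun j _ ↦ hA.posSemidef.eigenvalues_nonneg j) (Finset.mem_univ i)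

lemma posDef_sqrt_add_smul_one (A : Matrix n n ℂ) {η : ℝ} (hη : 0 < η) :
    (CFC.sqrt A + η • (1 : Matrix n n ℂ)).PosDef :=
  PosDef.posSemidef_add (CFC.sqrt_nonneg A).posSemidef (PosDef.one.smul hη)

lemma le_sqrt_add_smul_one_mul_self (hA : 0 ≤ A) {η : ℝ} (hη : 0 ≤ η) :
    A ≤ (CFC.sqrt A + η • (1 : Matrix n n ℂ)) * (CFC.sqrt A + η • (1 : Matrix n n ℂ)) := by
  have hexpand : (CFC.sqrt A + η • (1 : Matrix n n ℂ)) * (CFC.sqrt A + η • (1 : Matrix n n ℂ)) =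
      A + ((2 * η) • CFC.sqrt A + (η * η) • (1 : Matrix n n ℂ)) := by
    simp only [add_mul, mul_add, CFC.sqrt_mul_sqrt_self A hA, mul_smul_comm, smul_mul_assoc,
      mul_one, one_mul]
    module
  rw [hexpand]
  exact le_add_of_nonneg_right (add_nonneg (smul_nonneg (by positivity) (CFC.sqrt_nonneg A))
    (smul_nonneg (by positivity) zero_le_one))

lemma rtr_inv_sqrt_add_smul_one_mul_le (hA : 0 ≤ A) {η : ℝ} (hη : 0 < η) :
    rtr ((CFC.sqrt A + η • (1 : Matrix n n ℂ))⁻¹ * A) ≤ rtr (CFC.sqrt A) := by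
  have hD := posDef_sqrt_add_smul_one A hη
  set D := CFC.sqrt A + η • (1 : Matrix n n ℂ) with hDdef
  have hDinv : D⁻¹ * D = 1 := nonsing_inv_mul D ((isUnit_iff_isUnit_det D).1 hD.isUnit)
  have hsplit : D⁻¹ * A = CFC.sqrt A - η • (D⁻¹ * CFC.sqrt A) := by
    have hsqrt : CFC.sqrt A = D - η • 1 := by rw [hDdef, add_sub_cancel_right]
    calc D⁻¹ * A = D⁻¹ * CFC.sqrt A * CFC.sqrt A := by
          rw [mul_assoc, CFC.sqrt_mul_sqrt_self A hA]
      _ = (1 - η • D⁻¹) * CFC.sqrt A := by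
          rw [← hDinv, ← mul_smul_one, ← mul_sub, ← hsqrt]
      _ = CFC.sqrt A - η • (D⁻¹ * CFC.sqrt A) := by rw [sub_mul, one_mul, smul_mul_assoc]
  rw [hsplit, rtr_sub, rtr_smul]
  exact sub_le_self _ (mul_nonneg hη.le
    (rtr_mul_nonneg hD.inv.posSemidef.nonneg (CFC.sqrt_nonneg A)))

lemma add_self_le_add_mul_inv_mul {Y Z : Matrix n n ℂ} (hY : Y.PosDef) (hZ : Z.IsHermitian) :
    Z + Z ≤ Y + Z * Y⁻¹ * Z := by
  have hYdet := (isUnit_iff_isUnit_det Y).1 hY.isUnit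
  have hexpand : (Y - Z) * Y⁻¹ * (Y - Z) = Y + Z * Y⁻¹ * Z - (Z + Z) := by
    simp only [sub_mul, mul_sub, mul_nonsing_inv Y hYdet, nonsing_inv_mul_cancel_right Y _ hYdet,
      one_mul]
    abel
  rw [← sub_nonneg, ← hexpand]
  exact IsSelfAdjoint.conjugate_nonneg hY.inv.posSemidef.nonneg (hY.isHermitian.sub hZ)

end SpectralCalculus

section Duality

lemma nonneg_of_bddAbove_image_Iic {E : Type*} [AddCommGroup E] [PartialOrder E]
    [IsOrderedAddMonoid E] [Module ℝ E] [PosSMulMono ℝ E] (f : Module.Dual ℝ E) {a x : E}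
    (hf : BddAbove (f '' Set.Iic a)) (hx : 0 ≤ x) : 0 ≤ f x := by
  obtain ⟨u, hu⟩ := hf
  by_contra! hneg
  have hfa : f a ≤ u := hu ⟨a, le_rfl, rfl⟩
  let k : ℝ := (u - f a + 1) / -f x
  have hk : 0 ≤ k := div_nonneg (by linarith) (by linarith)
  have hkx : k * f x = -(u - f a + 1) := by
    simp only [k]
    field_simp [hneg.ne]
  have hle : f (a - k • x) ≤ u := hu ⟨_, sub_le_self a (smul_nonneg hk hx), rfl⟩
  rw [map_sub, map_smul, smul_eq_mul, hkx] at hle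
  linarith

variable {n : Type} [Fintype n]

lemma nonneg_of_rtr_mul_nonneg {N : Matrix n n ℂ} (hN : N.IsHermitian)
    (h : ∀ A : Matrix n n ℂ, 0 ≤ A → 0 ≤ rtr (N * A)) : 0 ≤ N := by
  refine (PosSemidef.of_dotProduct_mulVec_nonneg hN fun x ↦ Complex.le_def.2 ⟨?_, ?_⟩).nonneg
  · have hx := h _ (posSemidef_vecMulVec_self_star x).nonneg
    rwa [rtr, mul_vecMulVec, trace_vecMulVec, dotProduct_comm] at hx
  · exact (hN.im_star_dotProduct_mulVec_self x).symm

lemma exists_rtr_mul_eq (f : Module.Dual ℝ (Matrix n n ℂ)) :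
    ∃ M : Matrix n n ℂ, ∀ A, rtr (M * A) = f A := by
  classical
  let g : Module.Dual ℂ (Matrix n n ℂ) := f.extendRCLike
  have hg (A : Matrix n n ℂ) : (g A).re = f A := Module.Dual.re_extendRCLike_apply (𝕜 := ℂ) f A
  refine ⟨of fun j i ↦ g (single i j 1), fun A ↦ ?_⟩
  have hsum : g A = ∑ i, ∑ j, A i j * g (single i j 1) := by
    conv_lhs => rw [matrix_eq_sum_single A]
    simp only [map_sum]
    refine Finset.sum_congr rfl fun i _ ↦ Finset.sum_congr rfl fun j _ ↦ ?_
    rw [← smul_eq_mul, ← map_smul, smul_single, smul_eq_mul, mul_one]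
  rw [← hg, hsum, rtr, trace, Finset.sum_comm]
  simp [mul_apply, mul_comm]

lemma exists_nonneg_rtr_mul_eq (f : Module.Dual ℝ (Matrix n n ℂ))
    (hf : ∀ A : Matrix n n ℂ, 0 ≤ A → 0 ≤ f A) :
    ∃ N : Matrix n n ℂ, 0 ≤ N ∧ ∀ A : Matrix n n ℂ, A.IsHermitian → rtr (N * A) = f A := by
  obtain ⟨M, hM⟩ := exists_rtr_mul_eq f
  let N : Matrix n n ℂ := (2⁻¹ : ℝ) • (M + Mᴴ)
  have hN : N.IsHermitian := by
    simp [N, IsHermitian, conjTranspose_smul, add_comm]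
  have hNf {A : Matrix n n ℂ} (hA : A.IsHermitian) : rtr (N * A) = f A := by
    have hadj : rtr (Mᴴ * A) = f A := by
      rw [← hM A, ← rtr_conjTranspose (M * A), conjTranspose_mul, hA.eq, rtr_mul_comm]
    rw [smul_mul, rtr_smul, add_mul, rtr_add, hadj, hM]
    ring
  exact ⟨N, nonneg_of_rtr_mul_nonneg hN fun A hA ↦
    (hf A hA).trans_eq (hNf hA.posSemidef.isHermitian).symm, fun _ ↦ hNf⟩

lemma exists_mem_le_of_forall_rtr_mul_le {K : Set (Matrix n n ℂ)} (hconv : Convex ℝ K)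
    (hcomp : IsCompact K) (hherm : ∀ τ ∈ K, τ.IsHermitian) {S : Matrix n n ℂ} (hS : S.IsHermitian)
    (h : ∀ N : Matrix n n ℂ, 0 ≤ N → ∀ w, rtr (N * S) < w → ∃ τ ∈ K, rtr (N * τ) ≤ w) :
    ∃ τ ∈ K, τ ≤ S := by
  classical
  by_contra! hcon
  obtain ⟨f, u, v, hu, huv, hv⟩ := geometric_hahn_banach_closed_compact (convex_Iic S) isClosed_Iic
    hconv hcomp (Set.disjoint_left.2 fun τ hτS hτK ↦ hcon τ hτK hτS)
  have hbdd : BddAbove (f '' Set.Iic S) := ⟨u, Set.forall_mem_image.2 fun A hA ↦ (hu A hA).le⟩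
  obtain ⟨N, hN, hNf⟩ := exists_nonneg_rtr_mul_eq f.toLinearMap fun A hA ↦
    nonneg_of_bddAbove_image_Iic f.toLinearMap hbdd hA
  obtain ⟨τ, hτK, hτ⟩ := h N hN u ((hNf S hS).trans_lt (hu S Set.self_mem_Iic))
  exact (hτ.trans_lt huv).not_gt ((hv τ hτK).trans_eq (hNf τ (hherm τ hτK)).symm)

end Duality

section RootFidelityBall

variable {n : Type} [Fintype n] [DecidableEq n] {ρ τ : Matrix n n ℂ} {c : ℝ}

/-- The states whose root fidelity with `ρ` is at least `c`. Root fidelity is encoded by Alberti's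
variational formula `√F(ρ, τ) = inf_{Y > 0} (tr (Y ρ) + tr (Y⁻¹ τ)) / 2`, which exhibits the set as
an intersection of half-spaces of states. -/
def rootFidelityBall (ρ : Matrix n n ℂ) (c : ℝ) : Set (Matrix n n ℂ) :=
  {τ | IsState τ ∧ ∀ Y : Matrix n n ℂ, Y.PosDef → 2 * c ≤ rtr (Y * ρ) + rtr (Y⁻¹ * τ)}

lemma rootFidelityBall_eq (ρ : Matrix n n ℂ) (c : ℝ) :
    rootFidelityBall ρ c = (Set.Ici 0 ∩ {τ | τ.trace = 1}) ∩
      ⋂ (Y : Matrix n n ℂ) (_ : Y.PosDef), {τ | 2 * c ≤ rtr (Y * ρ) + rtr (Y⁻¹ * τ)} := by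
  ext τ
  simp [rootFidelityBall, IsState, nonneg_iff_posSemidef]

lemma convex_rootFidelityBall (ρ : Matrix n n ℂ) (c : ℝ) : Convex ℝ (rootFidelityBall ρ c) := by
  rintro τ₁ ⟨hτ₁, h₁⟩ τ₂ ⟨hτ₂, h₂⟩ a b ha hb hab
  refine ⟨⟨(add_nonneg (smul_nonneg ha hτ₁.nonneg) (smul_nonneg hb hτ₂.nonneg)).posSemidef, ?_⟩,
    fun Y hY ↦ ?_⟩
  · rw [trace_add, trace_smul, trace_smul, hτ₁.2, hτ₂.2, ← add_smul, hab, one_smul]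
  · rw [mul_add, Matrix.mul_smul, Matrix.mul_smul, rtr_add, rtr_smul, rtr_smul]
    obtain rfl : b = 1 - a := by linarith
    linear_combination a * h₁ Y hY + (1 - a) * h₂ Y hY

lemma isCompact_rootFidelityBall (ρ : Matrix n n ℂ) (c : ℝ) :
    IsCompact (rootFidelityBall ρ c) := by
  refine Metric.isCompact_of_isClosed_isBounded ?_ (isBounded_iff_forall_norm_le.2 ⟨1, ?_⟩)
  · rw [rootFidelityBall_eq]
    refine (isClosed_Ici.inter ?_).inter (isClosed_biInter fun Y _ ↦ ?_)
    · exact isClosed_eq continuous_id.matrix_trace continuous_const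
    · exact isClosed_le continuous_const (by fun_prop)
  · exact fun τ hτ ↦ (norm_le_rtr hτ.1.nonneg).trans_eq hτ.1.rtr_eq_one

lemma rootFidelityBall_antitone (ρ : Matrix n n ℂ) : Antitone (rootFidelityBall ρ) :=
  fun _ _ hc _ hτ ↦ ⟨hτ.1, fun Y hY ↦ (mul_le_mul_of_nonneg_left hc zero_le_two).trans (hτ.2 Y hY)⟩

/- When `τ` and `ρ` are invertible, the infimum in Alberti's formula is attained at
`Y = √τ * D⁻¹ * √τ` with `D = √(√τ * ρ * √τ)`. Here `E` is `√τ` shifted by a small multiple of `1`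
to make it invertible, and `D` will be shifted likewise. -/
lemma two_mul_le_of_le_mul_self (hτ : τ ∈ rootFidelityBall ρ c) {E D : Matrix n n ℂ}
    (hE : E.PosDef) (hτE : τ ≤ E * E) (hD : D.PosDef) :
    2 * c ≤ rtr (E * D⁻¹ * E * ρ) + rtr D := by
  have hEdet := (isUnit_iff_isUnit_det E).1 hE.isUnit
  have hY : (E * D⁻¹ * E).PosDef := by
    simpa only [hE.isHermitian.eq] using
      hD.inv.conjTranspose_mul_mul_same (mulVec_injective_of_isUnit hE.isUnit)
  have hYinv : (E * D⁻¹ * E)⁻¹ = E⁻¹ * D * E⁻¹ := by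
    rw [Matrix.mul_inv_rev, Matrix.mul_inv_rev,
      nonsing_inv_nonsing_inv D ((isUnit_iff_isUnit_det D).1 hD.isUnit), mul_assoc]
  have hle : E⁻¹ * τ * E⁻¹ ≤ 1 := by
    calc E⁻¹ * τ * E⁻¹ ≤ E⁻¹ * (E * E) * E⁻¹ :=
          IsSelfAdjoint.conjugate_le_conjugate hτE hE.inv.isHermitian
      _ = 1 := by rw [← mul_assoc, nonsing_inv_mul E hEdet, one_mul, mul_nonsing_inv E hEdet]
  calc 2 * c ≤ rtr (E * D⁻¹ * E * ρ) + rtr ((E * D⁻¹ * E)⁻¹ * τ) := hτ.2 _ hY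
    _ = rtr (E * D⁻¹ * E * ρ) + rtr (E⁻¹ * τ * E⁻¹ * D) := by
        rw [hYinv, mul_assoc (E⁻¹ * D), rtr_mul_comm (E⁻¹ * D), ← mul_assoc]
    _ ≤ rtr (E * D⁻¹ * E * ρ) + rtr D := by
        simpa using rtr_mul_le_rtr_mul_right hle hD.posSemidef.nonneg

lemma two_mul_le_rtr_inv_mul_add (hτ : τ ∈ rootFidelityBall ρ c) {D : Matrix n n ℂ}
    (hD : D.PosDef) : 2 * c ≤ rtr (D⁻¹ * (CFC.sqrt τ * ρ * CFC.sqrt τ)) + rtr D := by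
  let E : ℝ → Matrix n n ℂ := fun η ↦ CFC.sqrt τ + η • 1
  have hcont : Continuous fun η ↦ rtr (E η * D⁻¹ * E η * ρ) + rtr D := by fun_prop
  have hlim : Tendsto (fun η ↦ rtr (E η * D⁻¹ * E η * ρ) + rtr D) (𝓝[>] 0)
      (𝓝 (rtr (E 0 * D⁻¹ * E 0 * ρ) + rtr D)) := hcont.continuousWithinAt
  have hle : 2 * c ≤ rtr (E 0 * D⁻¹ * E 0 * ρ) + rtr D :=
    ge_of_tendsto hlim <| eventually_mem_nhdsWithin.mono fun η hη ↦
      two_mul_le_of_le_mul_self hτ (posDef_sqrt_add_smul_one τ hη)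
        (le_sqrt_add_smul_one_mul_self hτ.1.nonneg hη.le) hD
  have hE : E 0 = CFC.sqrt τ := by simp [E]
  rwa [hE, mul_assoc, mul_assoc, rtr_mul_comm, mul_assoc] at hle

lemma le_rtr_sqrt_of_mem_rootFidelityBall (hρ : 0 ≤ ρ) (hτ : τ ∈ rootFidelityBall ρ c) :
    c ≤ rtr (CFC.sqrt (CFC.sqrt τ * ρ * CFC.sqrt τ)) := by
  set A := CFC.sqrt τ * ρ * CFC.sqrt τ
  have hA : 0 ≤ A := (CFC.sqrt_nonneg τ).isSelfAdjoint.conjugate_nonneg hρ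
  let g : ℝ → ℝ := fun η ↦ rtr (CFC.sqrt A) + rtr (CFC.sqrt A + η • (1 : Matrix n n ℂ))
  have hg : Continuous g := by fun_prop
  have hlim : Tendsto g (𝓝[>] 0) (𝓝 (g 0)) := hg.continuousWithinAt
  have hle : 2 * c ≤ g 0 := ge_of_tendsto hlim <| eventually_mem_nhdsWithin.mono fun η hη ↦
    (two_mul_le_rtr_inv_mul_add hτ (posDef_sqrt_add_smul_one A hη)).trans
      (add_le_add_left (rtr_inv_sqrt_add_smul_one_mul_le hA hη) _)
  simp only [g, zero_smul, add_zero] at hle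
  linarith

lemma sineDist_le_of_mem_rootFidelityBall (hρ : 0 ≤ ρ) {ε : ℝ} (hε : 0 ≤ ε)
    (hτ : τ ∈ rootFidelityBall ρ √(1 - ε ^ 2)) : sineDist ρ τ ≤ ε := by
  have hA : 0 ≤ CFC.sqrt τ * ρ * CFC.sqrt τ :=
    (CFC.sqrt_nonneg τ).isSelfAdjoint.conjugate_nonneg hρ
  have hfid : 1 - ε ^ 2 ≤ fidelity ρ τ := by
    rw [fidelity, msqrt_eq_sqrt hτ.1.nonneg, msqrt_eq_sqrt hA]
    exact (Real.sqrt_le_iff.1 (le_rtr_sqrt_of_mem_rootFidelityBall hρ hτ)).2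
  exact Real.sqrt_le_iff.2 ⟨hε, by linarith⟩

lemma conj_mem_rootFidelityBall (hρ : 0 ≤ ρ) {Z : Matrix n n ℂ} (hZ : Z.IsHermitian)
    (hstate : IsState (Z * ρ * Z)) : Z * ρ * Z ∈ rootFidelityBall ρ (rtr (Z * ρ)) := by
  refine ⟨hstate, fun Y hY ↦ ?_⟩
  calc 2 * rtr (Z * ρ) = rtr ((Z + Z) * ρ) := by rw [add_mul, rtr_add, two_mul]
    _ ≤ rtr ((Y + Z * Y⁻¹ * Z) * ρ) :=
        rtr_mul_le_rtr_mul_right (add_self_le_add_mul_inv_mul hY hZ) hρ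
    _ = rtr (Y * ρ) + rtr (Y⁻¹ * (Z * ρ * Z)) := by
        rw [add_mul, rtr_add, ← mul_assoc Y⁻¹, rtr_mul_comm _ Z]
        simp only [mul_assoc]

lemma compression_mem_rootFidelityBall (hρ : IsState ρ) {Q : Matrix n n ℂ}
    (hQ : IsStarProjection Q) (hQρ : 0 < rtr (Q * ρ)) :
    (rtr (Q * ρ))⁻¹ • (Q * ρ * Q) ∈ rootFidelityBall ρ √(rtr (Q * ρ)) := by
  set t := rtr (Q * ρ) with ht
  have hQsa : Q.IsHermitian := hQ.isSelfAdjoint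
  have hconj : 0 ≤ t⁻¹ • (Q * ρ * Q) :=
    smul_nonneg (inv_nonneg.2 hQρ.le) (hQ.isSelfAdjoint.conjugate_nonneg hρ.nonneg)
  have hrtr : rtr (t⁻¹ • (Q * ρ * Q)) = 1 := by
    rw [rtr_smul, rtr_mul_cycle, hQ.isIdempotentElem.eq, ← ht, inv_mul_cancel₀ hQρ.ne']
  have hstate : IsState (t⁻¹ • (Q * ρ * Q)) :=
    ⟨hconj.posSemidef, by rw [trace_eq_rtr hconj, hrtr, Complex.ofReal_one]⟩
  let Z : Matrix n n ℂ := (√t)⁻¹ • Q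
  have hZ : Z.IsHermitian := IsSelfAdjoint.smul (.all _) hQsa
  have hZρZ : Z * ρ * Z = t⁻¹ • (Q * ρ * Q) := by
    simp only [Z, smul_mul_assoc, mul_smul_comm, smul_smul]
    rw [← mul_inv, Real.mul_self_sqrt hQρ.le]
  have hZρ : rtr (Z * ρ) = √t := by
    rw [smul_mul_assoc, rtr_smul, ← ht, inv_mul_eq_div, Real.div_sqrt]
  rw [← hZρ, ← hZρZ]
  exact conj_mem_rootFidelityBall hρ.nonneg hZ (hZρZ ▸ hstate)

end RootFidelityBall

section Smoothing

variable {n : Type} {ρ σ τ : Matrix n n ℂ} {e β : ℝ}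

lemma dMax_le_neg_logb (hβ : 0 < β) (hle : τ ≤ β⁻¹ • σ) :
    dMax τ σ ≤ ((-Real.logb 2 β : ℝ) : EReal) := by
  refine sInf_le ⟨_, rfl, ?_⟩
  rw [loewnerLE, Real.rpow_neg zero_le_two, Real.rpow_logb two_pos (by norm_num) hβ]
  exact hle

variable [Fintype n] [DecidableEq n]

lemma exists_mem_rootFidelityBall_rtr_mul_le (hρ : IsState ρ) (hσ : 0 ≤ σ) (he : e < 1)
    (hβ : 0 < β)
    (htest : ∀ T : Matrix n n ℂ, 0 ≤ T → T ≤ 1 → rtr (T * σ) < β → rtr (T * ρ) < e)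
    {N : Matrix n n ℂ} (hN : 0 ≤ N) {w : ℝ} (hw : rtr (N * σ) < w * β) :
    ∃ τ ∈ rootFidelityBall ρ √(1 - e), rtr (N * τ) ≤ w := by
  have hw₀ : 0 < w := pos_of_mul_pos_left ((rtr_mul_nonneg hN hσ).trans_lt hw) hβ.le
  obtain ⟨Q, hQ, hNQ, hQNQ⟩ := exists_isStarProjection_threshold hN w
  have hTσ : rtr ((1 - Q) * σ) < β := by
    have hle := rtr_mul_le_rtr_mul_right hNQ hσ
    rw [smul_mul_assoc, rtr_smul] at hle
    exact lt_of_mul_lt_mul_left (hle.trans_lt hw) hw₀.le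
  have hTρ := htest (1 - Q) (sub_nonneg.2 hQ.le_one) (sub_le_self _ hQ.nonneg) hTσ
  rw [sub_mul, one_mul, rtr_sub, hρ.rtr_eq_one] at hTρ
  have hQρ : 1 - e < rtr (Q * ρ) := by linarith
  have hQρ₀ : 0 < rtr (Q * ρ) := by linarith
  refine ⟨_, rootFidelityBall_antitone ρ (Real.sqrt_le_sqrt hQρ.le)
    (compression_mem_rootFidelityBall hρ hQ hQρ₀), ?_⟩
  calc rtr (N * ((rtr (Q * ρ))⁻¹ • (Q * ρ * Q)))
      = (rtr (Q * ρ))⁻¹ * rtr (Q * N * Q * ρ) := by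
        rw [mul_smul_comm, rtr_smul, ← mul_assoc, rtr_mul_comm _ Q]
        simp only [mul_assoc]
    _ ≤ (rtr (Q * ρ))⁻¹ * rtr (w • Q * ρ) := by
        gcongr
        exact rtr_mul_le_rtr_mul_right hQNQ hρ.nonneg
    _ = w := by
        rw [smul_mul_assoc, rtr_smul]
        field_simp

lemma exists_mem_rootFidelityBall_le (hρ : IsState ρ) (hσ : 0 ≤ σ) (he : e < 1) (hβ : 0 < β)
    (htest : ∀ T : Matrix n n ℂ, 0 ≤ T → T ≤ 1 → rtr (T * σ) < β → rtr (T * ρ) < e) :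
    ∃ τ ∈ rootFidelityBall ρ √(1 - e), τ ≤ β⁻¹ • σ := by
  have hσβ : 0 ≤ β⁻¹ • σ := smul_nonneg (inv_nonneg.2 hβ.le) hσ
  refine exists_mem_le_of_forall_rtr_mul_le (convex_rootFidelityBall ρ _)
    (isCompact_rootFidelityBall ρ _) (fun τ hτ ↦ hτ.1.1.isHermitian) hσβ.posSemidef.isHermitian
    fun N hN w hw ↦ exists_mem_rootFidelityBall_rtr_mul_le hρ hσ he hβ htest hN ?_
  rwa [mul_smul_comm, rtr_smul, inv_mul_lt_iff₀ hβ, mul_comm] at hw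

lemma rtr_mul_lt_of_rtr_mul_lt_sInf (hσ : 0 ≤ σ) {T : Matrix n n ℂ} (hT₀ : 0 ≤ T) (hT₁ : T ≤ 1)
    (hTσ : rtr (T * σ) < sInf {x : ℝ | ∃ R : Matrix n n ℂ, R.PosSemidef ∧ (1 - R).PosSemidef ∧
      e ≤ rtr (R * ρ) ∧ x = rtr (R * σ)}) : rtr (T * ρ) < e := by
  contrapose! hTσ
  refine csInf_le ⟨0, ?_⟩ ⟨T, hT₀.posSemidef, hT₁, hTσ, rfl⟩
  rintro _ ⟨R, hR, -, -, rfl⟩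
  exact rtr_mul_nonneg hR.nonneg hσ

theorem dMaxSmooth_le_dH_general (hρ : IsState ρ) (hσ : σ.PosSemidef) {ε : ℝ} (hε₀ : 0 ≤ ε)
    (hε₁ : ε < 1) : dMaxSmooth ε ρ σ ≤ dH (1 - ε ^ 2) ρ σ := by
  have he : ε ^ 2 < 1 := pow_lt_one₀ hε₀ hε₁ two_ne_zero
  rw [dH, sub_sub_cancel, elog]
  split_ifs with hβ
  · simp
  obtain ⟨τ, hτ, hτσ⟩ := exists_mem_rootFidelityBall_le hρ hσ.nonneg he (not_le.1 hβ)
    fun T ↦ rtr_mul_lt_of_rtr_mul_lt_sInf hσ.nonneg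
  exact (iInf₂_le τ ⟨hτ.1, sineDist_le_of_mem_rootFidelityBall hρ.nonneg hε₀ hτ⟩).trans
    (dMax_le_neg_logb (not_le.1 hβ) hτσ)

end Smoothing

/-- Smoothed max-relative entropy vs hypothesis testing divergence. -/
theorem dMaxSmooth_le_dH {d : ℕ} (ρ σ : Matrix (Fin d) (Fin d) ℂ)
    (hρ : IsState ρ) (hσ : IsState σ) (ε : ℝ) (hε : 0 < ε ∧ ε < 1) :
    dMaxSmooth ε ρ σ ≤ dH (1 - ε ^ 2) ρ σ - ((Real.logb 2 (1 - ε ^ 2) : ℝ) : EReal) := by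
  have he : ε ^ 2 < 1 := pow_lt_one₀ hε.1.le hε.2 two_ne_zero
  have hlog : Real.logb 2 (1 - ε ^ 2) ≤ 0 :=
    Real.logb_nonpos one_lt_two (sub_nonneg.2 he.le) (sub_le_self 1 (sq_nonneg ε))
  calc dMaxSmooth ε ρ σ ≤ dH (1 - ε ^ 2) ρ σ := dMaxSmooth_le_dH_general hρ hσ.1 hε.1.le hε.2
    _ = dH (1 - ε ^ 2) ρ σ - 0 := (sub_zero _).symm
    _ ≤ _ := EReal.sub_le_sub le_rfl (by exact_mod_cast hlog)

end QCD
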